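/- Under the interpolation setting, fix a step t, weights w_{i,t} ≥ 0 with Σ_{i=1}^M w_{i,t} = 1, momentum parameters λ_t ≥ 0 and λ_{t+1} = λ_t + 1/2, and step size 0 < η ≤ 1/(4ML·max_i w_{i,t}). Let z^t = (1 + λ_t)·θ^t − λ_t·θ^{t−1} and z^{t+1} = z^t − η·Σ_{i=1}^M w_{i,t} ∇f_i(θ^t). Then ‖z^{t+1} − θ*‖² ≤ ‖z^t − θ*‖² − 2ηλ_{t+1}·(f(θ^t) − f(θ*)) + 2ηλ_t·(f(θ^{t−1}) − f(θ*)) + η·δ^t + 2ηλ_t·μ_t, where δ^t = Σ_{i=1}^M (1/M − w_{i,t})·(f_i(θ^t) − f_i(θ*)) and μ_t = Σ_{i=1}^M (1/M − w_{i,t})·(f_i(θ^t) − f_i(θ^{t−1})). -/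

import Mathlib

open scoped InnerProductSpace BigOperators

/-- Per-step inequality for reweighted full-batch heavy-ball momentum under the
interpolation regime, with `λ_{t+1} = λ_t + 1/2` and step size
`0 < η ≤ 1/(4ML·max_i w_i)`. -/
theorem stmt_10 {d M : ℕ} (hM : 0 < M) (L : ℝ) (hL : 0 < L)
    (f : Fin M → EuclideanSpace ℝ (Fin d) → ℝ)
    (hdiff : ∀ i, Differentiable ℝ (f i))
    (hconv : ∀ i, ∀ θ₁ θ₂ : EuclideanSpace ℝ (Fin d),
      f i θ₂ + ⟪gradient (f i) θ₂, θ₁ - θ₂⟫_ℝ ≤ f i θ₁)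
    (hsmooth : ∀ i, ∀ θ θ' : EuclideanSpace ℝ (Fin d),
      ‖gradient (f i) θ - gradient (f i) θ'‖ ≤ L * ‖θ - θ'‖)
    (θstar : EuclideanSpace ℝ (Fin d))
    (hinterp : ∀ i θ, f i θstar ≤ f i θ)
    (w : Fin M → ℝ)
    (hw0 : ∀ i, 0 ≤ w i)
    (hw1 : ∑ i, w i = 1)
    (lamt lamnext : ℝ) (hlamt : 0 ≤ lamt) (hlamnext : lamnext = lamt + 1 / 2)
    (η : ℝ) (hη0 : 0 < η)
    (hη1 : η ≤ 1 / (4 * (M : ℝ) * L * (⨆ i, w i)))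
    (θt θprev zt znext : EuclideanSpace ℝ (Fin d))
    (hz : zt = (1 + lamt) • θt - lamt • θprev)
    (hznext : znext = zt - η • ∑ i, w i • gradient (f i) θt) :
    ‖znext - θstar‖ ^ 2
      ≤ ‖zt - θstar‖ ^ 2
        - 2 * η * lamnext
            * ((1 / (M : ℝ)) * ∑ i, f i θt - (1 / (M : ℝ)) * ∑ i, f i θstar)
        + 2 * η * lamt
            * ((1 / (M : ℝ)) * ∑ i, f i θprev - (1 / (M : ℝ)) * ∑ i, f i θstar)
        + η * ∑ i, ((1 / (M : ℝ)) - w i) * (f i θt - f i θstar)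
        + 2 * η * lamt * ∑ i, ((1 / (M : ℝ)) - w i) * (f i θt - f i θprev) := by
  have hMr : (0 : ℝ) < M := by exact_mod_cast hM
  -- gradient bound
  have hg : ∀ i, ‖gradient (f i) θt‖ ^ 2 ≤ 4 * L * (f i θt - f i θstar) := by
    intro i
    set g := gradient (f i) θt with hgdef
    set s : ℝ := 1 / (2 * L) with hs
    have hs0 : 0 < s := by positivity
    have hsL : L * s = 1 / 2 := by rw [hs]; field_simp
    have h1 := hconv i θt (θt - s • g)
    have h2 := hinterp i (θt - s • g)
    have h3 := hsmooth i θt (θt - s • g)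
    rw [sub_sub_cancel] at h1 h3
    rw [← hgdef, norm_smul, Real.norm_of_nonneg hs0.le, ← mul_assoc, hsL] at h3
    rw [inner_smul_right] at h1
    have h4 := real_inner_le_norm (g - gradient (f i) (θt - s • g)) g
    rw [inner_sub_left, real_inner_self_eq_norm_sq] at h4
    have h5 : ‖g - gradient (f i) (θt - s • g)‖ * ‖g‖ ≤ 1 / 2 * ‖g‖ * ‖g‖ :=
      mul_le_mul_of_nonneg_right h3 (norm_nonneg _)
    have h6 : 1 / 2 * ‖g‖ ^ 2 ≤ ⟪gradient (f i) (θt - s • g), g⟫_ℝ := by nlinarith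
    have h7 := mul_le_mul_of_nonneg_left h6 hs0.le
    have h8 : s * (1 / 2 * ‖g‖ ^ 2) ≤ f i θt - f i θstar := by linarith
    have h9 := mul_le_mul_of_nonneg_left h8 (by positivity : 0 ≤ 4 * L)
    have h10 : 4 * L * (s * (1 / 2 * ‖g‖ ^ 2)) = 2 * (L * s) * ‖g‖ ^ 2 := by ring
    rw [h10, hsL] at h9
    linarith
  set G := ∑ i, w i • gradient (f i) θt with hG
  have hJ : ‖G‖ ^ 2 ≤ ∑ i, w i * ‖gradient (f i) θt‖ ^ 2 := by
    have hc : ConvexOn ℝ Set.univ (fun x : EuclideanSpace ℝ (Fin d) => ‖x‖ ^ 2) :=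
      (convexOn_univ_norm).pow (fun _ _ => norm_nonneg _) 2
    have := hc.map_sum_le (t := Finset.univ) (w := w) (p := fun i => gradient (f i) θt)
      (fun i _ => hw0 i) hw1 (fun _ _ => Set.mem_univ _)
    simpa using this
  set S := ∑ i, w i * (f i θt - f i θstar) with hS
  have hS0 : 0 ≤ S := Finset.sum_nonneg fun i _ =>
    mul_nonneg (hw0 i) (sub_nonneg.2 (hinterp i θt))
  have hGS : ‖G‖ ^ 2 ≤ 4 * L * S := by
    refine hJ.trans ?_
    rw [hS, Finset.mul_sum]
    refine Finset.sum_le_sum fun i _ => ?_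
    have := mul_le_mul_of_nonneg_left (hg i) (hw0 i)
    linarith
  -- step size
  have hmax : 1 ≤ (M : ℝ) * ⨆ i, w i := by
    have : ∑ i, w i ≤ ∑ _i : Fin M, ⨆ i, w i :=
      Finset.sum_le_sum fun i _ => le_ciSup (Set.finite_range w).bddAbove i
    simpa [hw1] using this
  have hηL : η * (4 * L) ≤ 1 := by
    have hpos : 0 < 4 * (M : ℝ) * L * (⨆ i, w i) := by nlinarith
    rw [le_div_iff₀ hpos] at hη1
    have : η * (4 * L) * 1 ≤ η * (4 * L) * ((M : ℝ) * ⨆ i, w i) :=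
      mul_le_mul_of_nonneg_left hmax (by positivity)
    linarith
  have hquad : η ^ 2 * ‖G‖ ^ 2 ≤ η * S := by
    have h1 := mul_le_mul_of_nonneg_left hGS (by positivity : 0 ≤ η ^ 2)
    have h2 := mul_le_mul_of_nonneg_right hηL (mul_nonneg hη0.le hS0)
    nlinarith
  -- linear terms
  have hlin : ∀ y, ∑ i, w i * (f i θt - f i y) ≤ ⟪G, θt - y⟫_ℝ := by
    intro y
    rw [hG, sum_inner]
    refine Finset.sum_le_sum fun i _ => ?_
    rw [real_inner_smul_left]
    refine mul_le_mul_of_nonneg_left ?_ (hw0 i)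
    have := hconv i y θt
    rw [← neg_sub θt y, inner_neg_right] at this
    linarith
  have hl1 := mul_le_mul_of_nonneg_left (hlin θstar) hη0.le
  have hl2 := mul_le_mul_of_nonneg_left (hlin θprev) (mul_nonneg hη0.le hlamt)
  have hexp : ‖znext - θstar‖ ^ 2 = ‖zt - θstar‖ ^ 2
      - 2 * (η * ⟪G, θt - θstar⟫_ℝ) - 2 * (η * lamt * ⟪G, θt - θprev⟫_ℝ)
      + η ^ 2 * ‖G‖ ^ 2 := by
    have e1 : znext - θstar = (zt - θstar) - η • G := by rw [hznext]; abel
    have e2 : zt - θstar = (θt - θstar) + lamt • (θt - θprev) := by rw [hz]; module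
    have e3 : ⟪zt - θstar, η • G⟫_ℝ
        = η * ⟪G, θt - θstar⟫_ℝ + η * lamt * ⟪G, θt - θprev⟫_ℝ := by
      rw [real_inner_comm, e2, real_inner_smul_left, inner_add_right, inner_smul_right]
      ring
    rw [e1, norm_sub_sq_real, e3, norm_smul, Real.norm_of_nonneg hη0.le]
    ring
  have hd : ∀ y, ∑ i, ((1 / (M : ℝ)) - w i) * (f i θt - f i y)
      = 1 / (M : ℝ) * ∑ i, f i θt - 1 / (M : ℝ) * ∑ i, f i y
        - ∑ i, w i * (f i θt - f i y) := by
    intro y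
    simp only [sub_mul, Finset.sum_sub_distrib, mul_sub, Finset.mul_sum]
    ring
  rw [hexp, hd, hd, hlamnext]
  rw [← hS] at hl1 ⊢
  linarith
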